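/- arXiv:2002.02122 — 3 statements merged into one kernel-verified Lean document; each statement's English description precedes it below -/
import Mathlib

section
/- Let k be an algebraically closed field of characteristic 2, let A ∈ k be nonzero, and let C_A be the curve y^2 + y = A·x^5 + A·x^3. Every automorphism of C_A is of the form (x,y) ↦ (x + t, y + f_2 x^2 + f_1 x + f_0) where t satisfies t^16 + t^8 + A^{-2} t^2 + A^{-3} t = 0, f_1 = A t^4 + A t^2, f_2 = A^2 t^8 + A^2 t^4 + A t, and f_0^2 + f_0 = A t^5 + A t^3. Conversely every such choice gives an automorphism. In particular, the automorphism group of C_A has order 32. -/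
open Polynomial

namespace Stmt1

/-- The defining polynomial `Y² + Y - (Ax⁵ + Ax³)` of the affine model of the
supersingular genus-2 curve `C_A : y² + y = Ax⁵ + Ax³`. -/
noncomputable def curvePolyA {k : Type*} [Field k] (A : k) : Polynomial (k[X]) :=
  X ^ 2 + X - C (C A * X ^ 5 + C A * X ^ 3)

/-- The affine coordinate ring of `C_A`. -/
noncomputable abbrev CoordRing {k : Type*} [Field k] (A : k) : Type _ :=
  AdjoinRoot (curvePolyA A)

section Helpers

variable {k : Type*} [Field k] (A : k)

lemma curvePolyA_eq : curvePolyA A = X ^ 2 + (X - C (C A * X ^ 5 + C A * X ^ 3)) := by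
  rw [curvePolyA]; ring

lemma eval₂_curve {S : Type*} [CommRing S] (f : k[X] →+* S) (z : S) :
    eval₂ f z (curvePolyA A) = z ^ 2 + z - f (C A * X ^ 5 + C A * X ^ 3) := by
  rw [curvePolyA, eval₂_sub, eval₂_add, eval₂_pow, eval₂_X, eval₂_C]

lemma curve_monic : (curvePolyA A).Monic := by
  rw [curvePolyA_eq]
  apply monic_X_pow_add
  rw [degree_X_sub_C]; norm_num

lemma curve_natDegree : (curvePolyA A).natDegree = 2 := by
  rw [curvePolyA_eq]
  have : ((X : k[X][X]) - C (C A * X ^ 5 + C A * X ^ 3)).natDegree < (X ^ 2 : k[X][X]).natDegree := by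
    rw [natDegree_X_sub_C, natDegree_X_pow]; norm_num
  rw [natDegree_add_eq_left_of_natDegree_lt this, natDegree_X_pow]

/-- the basis `1, y`. -/
noncomputable def cbasis : Module.Basis (Fin 2) k[X] (CoordRing A) :=
  (AdjoinRoot.powerBasis' (curve_monic A)).basis.reindex <| finCongr (curve_natDegree A)

lemma cbasis_apply (n : Fin 2) : cbasis A n = (AdjoinRoot.root (curvePolyA A)) ^ (n : ℕ) := by
  rw [cbasis, Module.Basis.reindex_apply, PowerBasis.basis_eq_pow]
  rfl

lemma cbasis_zero : cbasis A 0 = 1 := by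
  simpa using cbasis_apply A 0

lemma cbasis_one : cbasis A 1 = AdjoinRoot.root (curvePolyA A) := by
  simpa using cbasis_apply A 1

lemma csmul (p : k[X]) (y : CoordRing A) : p • y = AdjoinRoot.of _ p * y := by
  rw [Algebra.smul_def]; rfl

lemma exists_rep (z : CoordRing A) : ∃ p q : k[X],
    z = AdjoinRoot.of _ p + AdjoinRoot.of _ q * AdjoinRoot.root _ := by
  have h := (cbasis A).sum_equivFun z
  rw [Fin.sum_univ_two, cbasis_zero, cbasis_one, csmul, csmul, mul_one] at h
  exact ⟨_, _, h.symm⟩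

lemma rep_zero {p q : k[X]} (h : (AdjoinRoot.of _ p + AdjoinRoot.of _ q * AdjoinRoot.root _ :
    CoordRing A) = 0) : p = 0 ∧ q = 0 := by
  have h1 := Fintype.linearIndependent_iff.mp (cbasis A).linearIndependent ![p, q]
  rw [Fin.sum_univ_two, cbasis_zero, cbasis_one] at h1
  simp only [csmul, Matrix.cons_val_zero, Matrix.cons_val_one, mul_one] at h1
  exact ⟨h1 h 0, h1 h 1⟩

lemma rep_inj {p q p' q' : k[X]}
    (h : (AdjoinRoot.of _ p + AdjoinRoot.of _ q * AdjoinRoot.root _ : CoordRing A) =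
      AdjoinRoot.of _ p' + AdjoinRoot.of _ q' * AdjoinRoot.root _) : p = p' ∧ q = q' := by
  have := rep_zero A (p := p - p') (q := q - q') (by
    rw [map_sub, map_sub]; linear_combination h)
  exact ⟨sub_eq_zero.mp this.1, sub_eq_zero.mp this.2⟩

lemma root_eq : (AdjoinRoot.root _ : CoordRing A) ^ 2 + AdjoinRoot.root _ =
    AdjoinRoot.of _ (C A * X ^ 5 + C A * X ^ 3) := by
  have := AdjoinRoot.eval₂_root (curvePolyA A)
  rw [curvePolyA, eval₂_sub, eval₂_add, eval₂_pow, eval₂_X, eval₂_C] at this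
  exact sub_eq_zero.mp this

lemma repr_rep (p q : k[X]) : (cbasis A).repr
    (AdjoinRoot.of _ p + AdjoinRoot.of _ q * AdjoinRoot.root _) =
    Finsupp.single 0 p + Finsupp.single 1 q := by
  have : (AdjoinRoot.of _ p + AdjoinRoot.of _ q * AdjoinRoot.root _ : CoordRing A) =
    p • cbasis A 0 + q • cbasis A 1 := by
    rw [cbasis_zero, cbasis_one, csmul, csmul, mul_one]
  rw [this, map_add, map_smul, map_smul, Module.Basis.repr_self, Module.Basis.repr_self]
  simp

lemma norm_rep (p q : k[X]) : Algebra.norm k[X]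
    (AdjoinRoot.of _ p + AdjoinRoot.of _ q * AdjoinRoot.root _ : CoordRing A) =
    p ^ 2 - p * q - q ^ 2 * (C A * X ^ 5 + C A * X ^ 3) := by
  have h1 : (AdjoinRoot.of _ p + AdjoinRoot.of _ q * AdjoinRoot.root _ : CoordRing A) *
      AdjoinRoot.root _ = AdjoinRoot.of _ (q * (C A * X ^ 5 + C A * X ^ 3)) +
        AdjoinRoot.of _ (p - q) * AdjoinRoot.root _ := by
    rw [map_mul, ← root_eq, map_sub]; ring
  rw [Algebra.norm_eq_matrix_det (cbasis A), Matrix.det_fin_two]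
  simp only [Algebra.leftMulMatrix_eq_repr_mul, cbasis_zero, cbasis_one, mul_one, h1, repr_rep]
  simp
  ring

lemma natDegree_B {A : k} (hA : A ≠ 0) : (C A * X ^ 5 + C A * X ^ 3 : k[X]).natDegree = 5 := by
  compute_degree!

lemma norm_degree {A : k} (hA : A ≠ 0) (p q : k[X]) (hq : q ≠ 0) :
    (p ^ 2 - p * q - q ^ 2 * (C A * X ^ 5 + C A * X ^ 3)).natDegree =
      max (2 * p.natDegree) (2 * q.natDegree + 5) := by
  set B : k[X] := C A * X ^ 5 + C A * X ^ 3 with hB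
  have hBd : B.natDegree = 5 := natDegree_B hA
  have hB0 : B ≠ 0 := by intro h; simp [h] at hBd
  have e1 : (q ^ 2 * B).natDegree = 2 * q.natDegree + 5 := by
    rw [natDegree_mul (pow_ne_zero _ hq) hB0, natDegree_pow, hBd]
  have e2 : (p ^ 2).natDegree = 2 * p.natDegree := natDegree_pow _ _
  have e3 : (p * q).natDegree ≤ p.natDegree + q.natDegree := natDegree_mul_le
  rcases lt_or_ge (2 * p.natDegree) (2 * q.natDegree + 5) with h | h
  · rw [max_eq_right h.le, natDegree_sub_eq_right_of_natDegree_lt, e1]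
    refine (natDegree_sub_le _ _).trans_lt ?_
    rw [e1, e2]; apply max_lt <;> omega
  · rw [max_eq_left h, sub_sub, natDegree_sub_eq_left_of_natDegree_lt, e2]
    refine (natDegree_add_le _ _).trans_lt ?_
    rw [e1, e2]; apply max_lt <;> omega

lemma norm_ne_zero {A : k} (hA : A ≠ 0) {z : CoordRing A} (hz : z ≠ 0) :
    Algebra.norm k[X] z ≠ 0 := by
  obtain ⟨p, q, rfl⟩ := exists_rep A z
  rw [norm_rep]
  intro h
  by_cases hq : q = 0
  · subst hq
    have : p = 0 := by simpa using h
    subst this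
    simp at hz
  · have := norm_degree hA p q hq
    rw [h, natDegree_zero] at this
    have := le_max_right (2 * p.natDegree) (2 * q.natDegree + 5)
    omega

lemma isDomain_coord {A : k} (hA : A ≠ 0) : IsDomain (CoordRing A) := by
  have : Nontrivial (CoordRing A) := ⟨_, _, (cbasis A).ne_zero 0⟩
  have : NoZeroDivisors (CoordRing A) := ⟨by
    intro a b hab
    by_contra! h
    have := mul_ne_zero (norm_ne_zero hA h.1) (norm_ne_zero hA h.2)
    rw [← map_mul, hab] at this
    apply this
    simpa using norm_rep A 0 0⟩
  exact NoZeroDivisors.to_isDomain _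

lemma natDegree_norm_map {A : k} (hA : A ≠ 0) (σ : CoordRing A ≃ₐ[k] CoordRing A)
    {z : CoordRing A} (hz : z ≠ 0) :
    (Algebra.norm k[X] (σ z)).natDegree = (Algebra.norm k[X] z).natDegree := by
  have := isDomain_coord hA
  rw [← finrank_quotient_span_eq_natDegree_norm (cbasis A) hz,
    ← finrank_quotient_span_eq_natDegree_norm (cbasis A)
      ((map_ne_zero_iff σ σ.injective).mpr hz)]
  refine (Ideal.quotientEquivAlg _ _ σ ?_).toLinearEquiv.finrank_eq.symm
  rw [Ideal.map_span, Set.image_singleton]; rfl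

lemma coeffs_zero {c0 c1 c2 c3 c4 c5 : k} (h : C c5 * X ^ 5 + C c4 * X ^ 4 + C c3 * X ^ 3 +
    C c2 * X ^ 2 + C c1 * X + C c0 = (0 : k[X])) :
    c0 = 0 ∧ c1 = 0 ∧ c2 = 0 ∧ c3 = 0 ∧ c4 = 0 ∧ c5 = 0 := by
  have h' := fun n => congrArg (fun p => coeff p n) h
  have h0 := h' 0
  have h1 := h' 1
  have h2 := h' 2
  have h3 := h' 3
  have h4 := h' 4
  have h5 := h' 5
  simp [coeff_X, coeff_C] at h0 h1 h2 h3 h4 h5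
  exact ⟨h0, h1, h2, h3, h4, h5⟩

lemma quad_form {r : k[X]} (h : r.natDegree ≤ 2) :
    r = C (r.coeff 2) * X ^ 2 + C (r.coeff 1) * X + C (r.coeff 0) := by
  conv_lhs => rw [r.as_sum_range_C_mul_X_pow' (n := 3) (by omega)]
  simp [Finset.sum_range_succ]
  ring

lemma algMap_eq (c : k) : algebraMap k (CoordRing A) c = AdjoinRoot.of _ (C c) := rfl

lemma aut_form {A : k} (hA : A ≠ 0) (σ : CoordRing A ≃ₐ[k] CoordRing A) : ∃ a t s f0 f1 f2 : k,
    s ≠ 0 ∧ a ≠ 0 ∧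
    σ (AdjoinRoot.of _ X) = AdjoinRoot.of _ (C a * X + C t) ∧
    σ (AdjoinRoot.root _) = AdjoinRoot.of _ (C f2 * X ^ 2 + C f1 * X + C f0) +
      AdjoinRoot.of _ (C s) * AdjoinRoot.root _ := by
  have hx : (AdjoinRoot.of _ X : CoordRing A) ≠ 0 := by
    intro h
    have := rep_zero A (p := X) (q := 0) (by simpa using h)
    exact X_ne_zero this.1
  have hy : (AdjoinRoot.root _ : CoordRing A) ≠ 0 := by
    intro h
    have := rep_zero A (p := 0) (q := 1) (by simpa using h)
    exact one_ne_zero this.2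
  have dx := natDegree_norm_map hA σ hx
  have dy := natDegree_norm_map hA σ hy
  have nx : (Algebra.norm k[X] (AdjoinRoot.of _ X : CoordRing A)).natDegree = 2 := by
    have := norm_rep A X 0
    simp only [map_zero, zero_mul, add_zero] at this
    rw [this]; simp
  have ny : (Algebra.norm k[X] (AdjoinRoot.root _ : CoordRing A)).natDegree = 5 := by
    have := norm_rep A 0 1
    simp only [map_zero, map_one, one_mul, zero_add] at this
    have e : (0 ^ 2 - 0 * 1 - 1 ^ 2 * (C A * X ^ 5 + C A * X ^ 3) : k[X]) =
      -(C A * X ^ 5 + C A * X ^ 3) := by ring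
    rw [this, e, natDegree_neg, natDegree_B hA]
  obtain ⟨p, q, e⟩ := exists_rep A (σ (AdjoinRoot.of _ X))
  obtain ⟨r, s, e'⟩ := exists_rep A (σ (AdjoinRoot.root _))
  rw [e, nx, norm_rep] at dx
  rw [e', ny, norm_rep] at dy
  have hq : q = 0 := by
    by_contra hq
    rw [norm_degree hA _ _ hq] at dx
    have := le_max_right (2 * p.natDegree) (2 * q.natDegree + 5)
    omega
  subst hq
  have hp : p.natDegree = 1 := by
    simp at dx; omega
  have hs : s ≠ 0 := by
    rintro rfl
    simp at dy; omega
  rw [norm_degree hA _ _ hs] at dy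
  have hs0 : s.natDegree = 0 := by
    have := le_max_right (2 * r.natDegree) (2 * s.natDegree + 5)
    omega
  have hr : r.natDegree ≤ 2 := by
    have := le_max_left (2 * r.natDegree) (2 * s.natDegree + 5)
    omega
  have hs1 := eq_C_of_natDegree_eq_zero hs0
  have hp1 := eq_X_add_C_of_natDegree_le_one hp.le
  refine ⟨p.coeff 1, p.coeff 0, s.coeff 0, r.coeff 0, r.coeff 1, r.coeff 2, ?_, ?_, ?_, ?_⟩
  · intro h; rw [h] at hs1; exact hs (by simpa using hs1)
  · rw [← hp]
    have : p ≠ 0 := by rintro rfl; simp at hp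
    simpa using this
  · rw [← hp1, e]; simp
  · rw [← hs1, ← quad_form hr, e']

lemma part1 [CharP k 2] {A : k} (hA : A ≠ 0) (σ : CoordRing A ≃ₐ[k] CoordRing A) :
    ∃ t f0 f1 f2 : k,
        t ^ 16 + t ^ 8 + A⁻¹ ^ 2 * t ^ 2 + A⁻¹ ^ 3 * t = 0 ∧
        f1 = A * t ^ 4 + A * t ^ 2 ∧
        f2 = A ^ 2 * t ^ 8 + A ^ 2 * t ^ 4 + A * t ∧
        f0 ^ 2 + f0 = A * t ^ 5 + A * t ^ 3 ∧
        σ (AdjoinRoot.of _ X) = AdjoinRoot.of _ X + algebraMap k _ t ∧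
        σ (AdjoinRoot.root _) = AdjoinRoot.root _ + algebraMap k _ f2 * (AdjoinRoot.of _ X) ^ 2
          + algebraMap k _ f1 * (AdjoinRoot.of _ X) + algebraMap k _ f0 := by
  obtain ⟨a, t, s, f0, f1, f2, hs, ha, e, e'⟩ := aut_form hA σ
  have h2 : (2 : k) = 0 := CharTwo.two_eq_zero
  have key := congrArg σ (root_eq A)
  have hr := root_eq A
  have halg : ∀ c : k, σ (AdjoinRoot.of _ (C c)) = AdjoinRoot.of _ (C c) := fun c => σ.commutes c
  simp only [map_add, map_mul, map_pow, e, e', halg] at key hr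
  have := rep_inj A (p := (C f2 * X ^ 2 + C f1 * X + C f0) ^ 2 + (C f2 * X ^ 2 + C f1 * X + C f0)
      + C s ^ 2 * (C A * X ^ 5 + C A * X ^ 3))
    (q := 2 * (C f2 * X ^ 2 + C f1 * X + C f0) * C s + C s - C s ^ 2)
    (p' := C A * (C a * X + C t) ^ 5 + C A * (C a * X + C t) ^ 3) (q' := 0) (by
      simp only [map_add, map_mul, map_pow, map_sub, map_zero, map_ofNat]
      linear_combination key - AdjoinRoot.of _ (C s) ^ 2 * hr)
  obtain ⟨hp, hq⟩ := this
  have h2' : (2 : k[X]) = 0 := CharTwo.two_eq_zero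
  rw [h2', zero_mul, zero_mul, zero_add, ← C_pow, ← C_sub, C_eq_zero] at hq
  have hs1 : s = 1 := by
    have : s * (1 - s) = 0 := by linear_combination hq
    rcases mul_eq_zero.mp this with h | h
    · exact absurd h hs
    · exact (sub_eq_zero.mp h).symm
  subst hs1
  have hc := coeffs_zero (k := k) (c5 := A - A * a ^ 5) (c4 := f2 ^ 2 - 5 * A * a ^ 4 * t)
    (c3 := 2 * f2 * f1 + A - 10 * A * a ^ 3 * t ^ 2 - A * a ^ 3)
    (c2 := f1 ^ 2 + 2 * f2 * f0 + f2 - 10 * A * a ^ 2 * t ^ 3 - 3 * A * a ^ 2 * t)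
    (c1 := 2 * f1 * f0 + f1 - 5 * A * a * t ^ 4 - 3 * A * a * t ^ 2)
    (c0 := f0 ^ 2 + f0 - A * t ^ 5 - A * t ^ 3) (by
      simp only [map_add, map_mul, map_pow, map_sub, map_ofNat, map_one] at hp ⊢
      linear_combination hp)
  obtain ⟨c0, c1, c2, c3, c4, c5⟩ := hc
  have a5 : a ^ 5 = 1 := by
    have : A * (a ^ 5 - 1) = 0 := by linear_combination -c5
    simpa [hA, sub_eq_zero] using this
  have a3 : a ^ 3 = 1 := by
    have : A * (a ^ 3 - 1) = 0 := by
      linear_combination -c3 + (f2 * f1 - 5 * A * a ^ 3 * t ^ 2) * h2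
    simpa [hA, sub_eq_zero] using this
  have a1 : a = 1 := by linear_combination (a ^ 3 + 1) * a3 - a * a5
  subst a1
  have hf1 : f1 = A * t ^ 4 + A * t ^ 2 := by
    linear_combination c1 + (- f1 * f0 + 2 * A * t ^ 4 + A * t ^ 2) * h2
  have hf2' : f2 = f1 ^ 2 + A * t := by
    linear_combination c2 + (- f1 ^ 2 - f2 * f0 + 5 * A * t ^ 3 + A * t) * h2
  have hf2 : f2 = A ^ 2 * t ^ 8 + A ^ 2 * t ^ 4 + A * t := by
    rw [hf2', hf1]; linear_combination (A ^ 2 * t ^ 6) * h2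
  refine ⟨t, f0, f1, f2, ?_, hf1, hf2, ?_, ?_, ?_⟩
  · have : A ^ 4 * (t ^ 16 + t ^ 8 + A⁻¹ ^ 2 * t ^ 2 + A⁻¹ ^ 3 * t) = 0 := by
      have e : A ^ 4 * (t ^ 16 + t ^ 8 + A⁻¹ ^ 2 * t ^ 2 + A⁻¹ ^ 3 * t) =
        A ^ 4 * t ^ 16 + A ^ 4 * t ^ 8 + A ^ 2 * t ^ 2 + A * t := by field_simp
      rw [e]
      rw [hf2] at c4
      linear_combination c4 + (3 * A * t - A ^ 4 * t ^ 12 - A ^ 3 * t ^ 9 - A ^ 3 * t ^ 5) * h2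
    exact (mul_eq_zero.mp this).resolve_left (pow_ne_zero _ hA)
  · linear_combination c0
  · rw [e, algMap_eq]; simp
  · rw [e', algMap_eq, algMap_eq, algMap_eq]; simp; ring

lemma algHom_ext_xy {A : k} {S : Type*} [CommRing S] [Algebra k S] {f g : CoordRing A →ₐ[k] S}
    (hx : f (AdjoinRoot.of _ X) = g (AdjoinRoot.of _ X))
    (hy : f (AdjoinRoot.root _) = g (AdjoinRoot.root _)) : f = g := by
  apply AdjoinRoot.algHom_ext'
  · apply Polynomial.algHom_ext
    exact hx
  · exact hy

lemma exists_hom [CharP k 2] {A : k} (hA : A ≠ 0) (t f0 f1 f2 : k)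
    (ht : t ^ 16 + t ^ 8 + A⁻¹ ^ 2 * t ^ 2 + A⁻¹ ^ 3 * t = 0)
    (h1 : f1 = A * t ^ 4 + A * t ^ 2)
    (h2 : f2 = A ^ 2 * t ^ 8 + A ^ 2 * t ^ 4 + A * t)
    (h0 : f0 ^ 2 + f0 = A * t ^ 5 + A * t ^ 3) :
    ∃ σ : CoordRing A →ₐ[k] CoordRing A,
      σ (AdjoinRoot.of _ X) = AdjoinRoot.of _ X + algebraMap k _ t ∧
      σ (AdjoinRoot.root _) = AdjoinRoot.root _ + algebraMap k _ f2 * (AdjoinRoot.of _ X) ^ 2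
          + algebraMap k _ f1 * (AdjoinRoot.of _ X) + algebraMap k _ f0 := by
  have two : (2 : k) = 0 := CharTwo.two_eq_zero
  have h4 : f2 ^ 2 = A * t := by
    have e : A ^ 4 * (t ^ 16 + t ^ 8 + A⁻¹ ^ 2 * t ^ 2 + A⁻¹ ^ 3 * t) =
        A ^ 4 * t ^ 16 + A ^ 4 * t ^ 8 + A ^ 2 * t ^ 2 + A * t := by field_simp
    rw [ht, mul_zero] at e
    rw [h2]
    linear_combination -e + (- A * t + A ^ 4 * t ^ 12 + A ^ 3 * t ^ 9 + A ^ 3 * t ^ 5) * two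
  have h22 : f2 = f1 ^ 2 + A * t := by
    rw [h2, h1]; linear_combination (-A ^ 2 * t ^ 6) * two
  have hr := root_eq A
  set φ : k →+* CoordRing A := algebraMap k (CoordRing A) with hφ
  set x : CoordRing A := AdjoinRoot.of _ X with hx
  set y : CoordRing A := AdjoinRoot.root _ with hy
  have hr' : y ^ 2 + y = φ A * x ^ 5 + φ A * x ^ 3 := by
    rw [hr]; simp only [map_add, map_mul, map_pow]; rfl
  have two' := congrArg φ two
  have h4' := congrArg φ h4
  have h22' := congrArg φ h22
  have h0' := congrArg φ h0
  have h1' := congrArg φ h1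
  simp only [map_add, map_mul, map_pow, map_ofNat, map_zero] at two' h4' h22' h0' h1'
  refine ⟨AdjoinRoot.liftAlgHom (curvePolyA A) (aeval (x + φ t)) (y + φ f2 * x ^ 2 + φ f1 * x + φ f0) ?_, ?_, ?_⟩
  · refine (eval₂_curve A _ _).trans ?_
    have : (aeval (x + φ t)) (C A * X ^ 5 + C A * X ^ 3) =
        φ A * (x + φ t) ^ 5 + φ A * (x + φ t) ^ 3 := by
      simp only [map_add, map_mul, map_pow, aeval_X, aeval_C]; rfl
    refine (congrArg (fun w => (y + φ f2 * x ^ 2 + φ f1 * x + φ f0) ^ 2 +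
      (y + φ f2 * x ^ 2 + φ f1 * x + φ f0) - w) this).trans ?_
    generalize φ A = A at *
    generalize φ t = t at *
    generalize φ f0 = f0 at *
    generalize φ f1 = f1 at *
    generalize φ f2 = f2 at *
    linear_combination hr' + x ^ 4 * h4' + x ^ 2 * h22' + x * h1' + h0' +
      (y * (f2 * x ^ 2 + f1 * x + f0) + f2 * f1 * x ^ 3 + f2 * f0 * x ^ 2 + f1 * f0 * x
        + f1 ^ 2 * x ^ 2
        - A * (2 * x ^ 4 * t + 5 * x ^ 3 * t ^ 2 + 5 * x ^ 2 * t ^ 3 + 2 * x * t ^ 4)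
        - A * (x ^ 2 * t + x * t ^ 2)) * two'
  · exact (AdjoinRoot.liftAlgHom_of _ _ _ _ _).trans (aeval_X _)
  · exact AdjoinRoot.liftAlgHom_root _ _ _ _

lemma part2 [CharP k 2] {A : k} (hA : A ≠ 0) (t f0 f1 f2 : k)
    (ht : t ^ 16 + t ^ 8 + A⁻¹ ^ 2 * t ^ 2 + A⁻¹ ^ 3 * t = 0)
    (h1 : f1 = A * t ^ 4 + A * t ^ 2)
    (h2 : f2 = A ^ 2 * t ^ 8 + A ^ 2 * t ^ 4 + A * t)
    (h0 : f0 ^ 2 + f0 = A * t ^ 5 + A * t ^ 3) :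
    ∃ σ : CoordRing A ≃ₐ[k] CoordRing A,
      σ (AdjoinRoot.of _ X) = AdjoinRoot.of _ X + algebraMap k _ t ∧
      σ (AdjoinRoot.root _) = AdjoinRoot.root _ + algebraMap k _ f2 * (AdjoinRoot.of _ X) ^ 2
          + algebraMap k _ f1 * (AdjoinRoot.of _ X) + algebraMap k _ f0 := by
  obtain ⟨σ, hx, hy⟩ := exists_hom hA t f0 f1 f2 ht h1 h2 h0
  have two : (2 : CoordRing A) = 0 := by
    have := congrArg (algebraMap k (CoordRing A)) (CharTwo.two_eq_zero : (2 : k) = 0)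
    simpa only [map_ofNat, map_zero] using this
  have hx2 : σ (σ (AdjoinRoot.of _ X)) = AdjoinRoot.of _ X := by
    rw [hx, map_add, hx, σ.commutes]
    linear_combination (algebraMap k (CoordRing A) t) * two
  have hy2 : σ (σ (AdjoinRoot.root _)) = AdjoinRoot.root _ +
      algebraMap k (CoordRing A) (f2 * t ^ 2 + f1 * t) := by
    rw [hy]
    simp only [map_add, map_mul, map_pow, hx, hy, σ.commutes]
    linear_combination (algebraMap k (CoordRing A) f2 * (AdjoinRoot.of _ X) ^ 2
          + algebraMap k _ f2 * (AdjoinRoot.of _ X) * algebraMap k _ t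
          + algebraMap k _ f1 * (AdjoinRoot.of _ X) + algebraMap k _ f0) * two
  have hy4 : σ (σ (σ (σ (AdjoinRoot.root _)))) = AdjoinRoot.root _ := by
    rw [hy2, map_add, map_add, σ.commutes, σ.commutes, hy2]
    linear_combination (algebraMap k (CoordRing A) (f2 * t ^ 2 + f1 * t)) * two
  have h4 : ∀ z, σ (σ (σ (σ z))) = z := by
    have : (σ.comp (σ.comp (σ.comp σ))) = AlgHom.id k (CoordRing A) := by
      apply algHom_ext_xy
      · simp only [AlgHom.comp_apply, hx2, AlgHom.id_apply]
      · simp only [AlgHom.comp_apply, hy4, AlgHom.id_apply]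
    intro z
    exact DFunLike.congr_fun this z
  exact ⟨AlgEquiv.ofAlgHom σ (σ.comp (σ.comp σ)) (AlgHom.ext h4) (AlgHom.ext h4), hx, hy⟩

lemma card_pairs [IsAlgClosed k] [CharP k 2] {A : k} (hA : A ≠ 0) :
    Nat.card {p : k × k // (p.1 ^ 16 + p.1 ^ 8 + A⁻¹ ^ 2 * p.1 ^ 2 + A⁻¹ ^ 3 * p.1 = 0) ∧
      p.2 ^ 2 + p.2 = A * p.1 ^ 5 + A * p.1 ^ 3} = 32 := by
  classical
  have two : (2 : k[X]) = 0 := CharTwo.two_eq_zero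
  set P : k[X] := X ^ 16 + X ^ 8 + C (A⁻¹ ^ 2) * X ^ 2 + C (A⁻¹ ^ 3) * X with hP
  set Q : k → k[X] := fun t => X ^ 2 + X - C (A * t ^ 5 + A * t ^ 3) with hQ
  have Pd : P.natDegree = 16 := by rw [hP]; compute_degree!
  have P0 : P ≠ 0 := by intro h; simp [h] at Pd
  have Qd : ∀ t, (Q t).natDegree = 2 := by
    intro t; simp only [hQ]; compute_degree!
  have Q0 : ∀ t, Q t ≠ 0 := by intro t h; have := Qd t; simp [h] at this
  have Ps : P.Separable := by
    have : derivative P = C (A⁻¹ ^ 3) := by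
      simp only [hP, derivative_add, derivative_X_pow, derivative_C_mul, derivative_X, map_natCast]
      push_cast
      linear_combination (8 * X ^ 15 + 4 * X ^ 7 + C (A⁻¹ ^ 2) * X) * two
    rw [Polynomial.separable_def, this]
    refine IsCoprime.symm ⟨C (A ^ 3), 0, ?_⟩
    rw [zero_mul, add_zero, ← C_mul, ← mul_pow, mul_inv_cancel₀ hA, one_pow, C_1]
  have Qs : ∀ t, (Q t).Separable := by
    intro t
    have : derivative (Q t) = 1 := by
      simp only [hQ, derivative_sub, derivative_add, derivative_X_pow, derivative_X, derivative_C,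
        map_natCast]
      push_cast
      linear_combination X * two
    rw [Polynomial.separable_def, this]
    exact isCoprime_one_right
  have Pc : P.roots.toFinset.card = 16 := by
    rw [Multiset.toFinset_card_of_nodup (nodup_roots Ps), IsAlgClosed.card_roots_eq_natDegree, Pd]
  have Qc : ∀ t, (Q t).roots.toFinset.card = 2 := by
    intro t
    rw [Multiset.toFinset_card_of_nodup (nodup_roots (Qs t)),
      IsAlgClosed.card_roots_eq_natDegree, Qd]
  set S := P.roots.toFinset.sigma (fun t => (Q t).roots.toFinset) with hS
  have Sc : S.card = 32 := by
    rw [hS, Finset.card_sigma, Finset.sum_congr rfl (fun t _ => Qc t)]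
    simp [Pc]
  have hmem : ∀ t f : k, (⟨t, f⟩ : (_ : k) × k) ∈ S ↔
      (t ^ 16 + t ^ 8 + A⁻¹ ^ 2 * t ^ 2 + A⁻¹ ^ 3 * t = 0) ∧
        f ^ 2 + f = A * t ^ 5 + A * t ^ 3 := by
    intro t f
    rw [hS, Finset.mem_sigma, Multiset.mem_toFinset, Multiset.mem_toFinset, mem_roots P0,
      mem_roots (Q0 t), IsRoot.def, IsRoot.def]
    have e1 : eval t P = t ^ 16 + t ^ 8 + A⁻¹ ^ 2 * t ^ 2 + A⁻¹ ^ 3 * t := by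
      simp only [hP, eval_add, eval_mul, eval_pow, eval_X, eval_C]
    have e2 : eval f (Q t) = f ^ 2 + f - (A * t ^ 5 + A * t ^ 3) := by
      simp only [hQ, eval_add, eval_sub, eval_pow, eval_X, eval_C]
    rw [e1, e2, sub_eq_zero]
  rw [← Sc, ← Nat.card_eq_finsetCard S]
  refine Nat.card_congr ⟨fun p => ⟨⟨p.1.1, p.1.2⟩, (hmem _ _).mpr p.2⟩,
    fun q => ⟨⟨q.1.1, q.1.2⟩, (hmem _ _).mp q.2⟩, ?_, ?_⟩
  · intro p; rfl
  · intro q; rfl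

lemma part3 [IsAlgClosed k] [CharP k 2] {A : k} (hA : A ≠ 0) :
    Nat.card (CoordRing A ≃ₐ[k] CoordRing A) = 32 := by
  rw [← card_pairs hA]
  symm
  have hof : ∀ p p' : k[X], (AdjoinRoot.of _ p : CoordRing A) = AdjoinRoot.of _ p' → p = p' := by
    intro p p' h
    exact (rep_inj A (p := p) (q := 0) (p' := p') (q' := 0) (by rw [h])).1
  have hinj : ∀ c d : k, algebraMap k (CoordRing A) c = algebraMap k (CoordRing A) d → c = d :=
    fun c d h => C_injective (hof _ _ h)
  have H := fun p : {p : k × k // (p.1 ^ 16 + p.1 ^ 8 + A⁻¹ ^ 2 * p.1 ^ 2 + A⁻¹ ^ 3 * p.1 = 0) ∧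
      p.2 ^ 2 + p.2 = A * p.1 ^ 5 + A * p.1 ^ 3} =>
    part2 hA p.1.1 p.1.2 _ _ p.2.1 rfl rfl p.2.2
  choose F hFx hFy using H
  refine Nat.card_eq_of_bijective F ⟨?_, ?_⟩
  · rintro ⟨⟨t, f⟩, h⟩ ⟨⟨t', f'⟩, h'⟩ e
    have ex := hFx ⟨⟨t, f⟩, h⟩
    have ey := hFy ⟨⟨t, f⟩, h⟩
    rw [e, hFx] at ex
    rw [e, hFy] at ey
    have := hinj _ _ (add_left_cancel ex)
    dsimp only at this
    subst this
    have := hinj _ _ (add_left_cancel ey)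
    dsimp only at this
    subst this
    rfl
  · intro σ
    obtain ⟨t, f0, f1, f2, ht, h1, h2, h0, hx, hy⟩ := part1 hA σ
    subst h1 h2
    refine ⟨⟨⟨t, f0⟩, ht, h0⟩, ?_⟩
    apply AlgEquiv.coe_toAlgHom_injective
    apply algHom_ext_xy
    · exact (hFx _).trans hx.symm
    · exact (hFy _).trans hy.symm

end Helpers

/-- Every automorphism of `C_A : y² + y = Ax⁵ + Ax³` (equivalently, every
`k`-algebra automorphism of its coordinate ring, since the unique point at infinity
is fixed by every automorphism) has the form
`(x,y) ↦ (x + t, y + f₂x² + f₁x + f₀)` with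
`t¹⁶ + t⁸ + A⁻²t² + A⁻³t = 0`, `f₁ = At⁴ + At²`, `f₂ = A²t⁸ + A²t⁴ + At`,
`f₀² + f₀ = At⁵ + At³`; conversely every such choice gives an automorphism;
and the automorphism group has order 32. -/
theorem stmt_1 (k : Type*) [Field k] [IsAlgClosed k] [CharP k 2] (A : k) (hA : A ≠ 0) :
    let xx : CoordRing A := AdjoinRoot.of _ X
    let yy : CoordRing A := AdjoinRoot.root _
    (∀ σ : CoordRing A ≃ₐ[k] CoordRing A, ∃ t f0 f1 f2 : k,
        t ^ 16 + t ^ 8 + A⁻¹ ^ 2 * t ^ 2 + A⁻¹ ^ 3 * t = 0 ∧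
        f1 = A * t ^ 4 + A * t ^ 2 ∧
        f2 = A ^ 2 * t ^ 8 + A ^ 2 * t ^ 4 + A * t ∧
        f0 ^ 2 + f0 = A * t ^ 5 + A * t ^ 3 ∧
        σ xx = xx + algebraMap k _ t ∧
        σ yy = yy + algebraMap k _ f2 * xx ^ 2 + algebraMap k _ f1 * xx
          + algebraMap k _ f0) ∧
    (∀ t f0 f1 f2 : k,
        t ^ 16 + t ^ 8 + A⁻¹ ^ 2 * t ^ 2 + A⁻¹ ^ 3 * t = 0 →
        f1 = A * t ^ 4 + A * t ^ 2 →
        f2 = A ^ 2 * t ^ 8 + A ^ 2 * t ^ 4 + A * t →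
        f0 ^ 2 + f0 = A * t ^ 5 + A * t ^ 3 →
        ∃ σ : CoordRing A ≃ₐ[k] CoordRing A,
          σ xx = xx + algebraMap k _ t ∧
          σ yy = yy + algebraMap k _ f2 * xx ^ 2 + algebraMap k _ f1 * xx
            + algebraMap k _ f0) ∧
    Nat.card (CoordRing A ≃ₐ[k] CoordRing A) = 32 := by
  intro xx yy
  exact ⟨fun σ => part1 hA σ, fun t f0 f1 f2 ht h1 h2 h0 => part2 hA t f0 f1 f2 ht h1 h2 h0,
    part3 hA⟩

end Stmt1
end

section
/- Let k be an algebraically closed field of characteristic 2, let A be nonzero in k, let C_A be the curve y^2 + y = A x^5 + A x^3, and let α: (x,y) ↦ (x + t, y + f_2 x^2 + f_1 x + f_0) be an automorphism of C_A with t ≠ 0, f_1 = A t^4 + A t^2, f_2 = A^2 t^8 + A^2 t^4 + A t. Then α^2 is the map (x,y) ↦ (x, y + A t^5 (A t^5 + A t + 1)). Consequently α has order 2 if t^5 + t + A^{-1} = 0, and α has order 4 with α^2 equal to the hyperelliptic involution if t^{10} + t^6 + A^{-1} t^5 + A^{-2} = 0. -/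
open Polynomial

namespace Stmt4

/-- The defining polynomial `Y² + Y - (Ax⁵ + Ax³)` of the affine model of
`C_A : y² + y = Ax⁵ + Ax³`. -/
noncomputable def curvePolyA {k : Type*} [Field k] (A : k) : Polynomial (k[X]) :=
  X ^ 2 + X - C (C A * X ^ 5 + C A * X ^ 3)

/-- The affine coordinate ring of `C_A`. -/
noncomputable abbrev CoordRing {k : Type*} [Field k] (A : k) : Type _ :=
  AdjoinRoot (curvePolyA A)

theorem algEquiv_eq_one {k : Type*} [Field k] {A : k} (τ : CoordRing A ≃ₐ[k] CoordRing A)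
    (hx : τ (AdjoinRoot.of _ X) = AdjoinRoot.of _ X)
    (hy : τ (AdjoinRoot.root _) = AdjoinRoot.root _) : τ = 1 := by
  have hof : ∀ p : k[X], τ (AdjoinRoot.of _ p) = AdjoinRoot.of _ p := by
    intro p
    have h : ((τ : CoordRing A →+* CoordRing A).comp (AdjoinRoot.of (curvePolyA A)))
        = AdjoinRoot.of (curvePolyA A) := by
      apply Polynomial.ringHom_ext
      · intro a
        exact τ.commutes a
      · exact hx
    exact congrArg (fun f => f p) h
  ext z
  induction z using AdjoinRoot.induction_on with
  | ih p =>
    induction p using Polynomial.induction_on' with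
    | add p q hp hq => simpa using congrArg₂ (· + ·) hp hq
    | monomial n a =>
      rw [← C_mul_X_pow_eq_monomial, map_mul, map_pow, AdjoinRoot.mk_X, AdjoinRoot.mk_C,
        map_mul, map_pow, hy, hof]
      rfl

theorem coordRing_nontrivial {k : Type*} [Field k] (A : k) : Nontrivial (CoordRing A) := by
  apply AdjoinRoot.nontrivial
  have h : (curvePolyA A).degree = 2 := by
    unfold curvePolyA
    compute_degree!
  rw [h]
  decide

/-- Let `α : (x,y) ↦ (x + t, y + f₂x² + f₁x + f₀)` be an automorphism of
`C_A : y² + y = Ax⁵ + Ax³` with `t ≠ 0`, `f₁ = At⁴ + At²`, `f₂ = A²t⁸ + A²t⁴ + At`.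
Then `α² : (x,y) ↦ (x, y + At⁵(At⁵ + At + 1))`; consequently `α` has order 2 if
`t⁵ + t + A⁻¹ = 0`, and order 4 with `α²` the hyperelliptic involution
`(x,y) ↦ (x, y + 1)` if `t¹⁰ + t⁶ + A⁻¹t⁵ + A⁻² = 0`. -/
theorem stmt_4 (k : Type*) [Field k] [IsAlgClosed k] [CharP k 2] (A : k) (hA : A ≠ 0)
    (t f0 f1 f2 : k) (ht : t ≠ 0)
    (hf1 : f1 = A * t ^ 4 + A * t ^ 2)
    (hf2 : f2 = A ^ 2 * t ^ 8 + A ^ 2 * t ^ 4 + A * t)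
    (σ : CoordRing A ≃ₐ[k] CoordRing A)
    (hσx : σ (AdjoinRoot.of _ X) = AdjoinRoot.of _ X + algebraMap k _ t)
    (hσy : σ (AdjoinRoot.root _) = AdjoinRoot.root _
        + algebraMap k _ f2 * (AdjoinRoot.of _ X) ^ 2
        + algebraMap k _ f1 * (AdjoinRoot.of _ X) + algebraMap k _ f0) :
    ((σ * σ) (AdjoinRoot.of _ X) = AdjoinRoot.of _ X ∧
      (σ * σ) (AdjoinRoot.root _) = AdjoinRoot.root _
        + algebraMap k _ (A * t ^ 5 * (A * t ^ 5 + A * t + 1))) ∧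
    (t ^ 5 + t + A⁻¹ = 0 → orderOf σ = 2) ∧
    (t ^ 10 + t ^ 6 + A⁻¹ * t ^ 5 + A⁻¹ ^ 2 = 0 →
      orderOf σ = 4 ∧
      (σ * σ) (AdjoinRoot.root _) = AdjoinRoot.root _ + 1) := by
  have := coordRing_nontrivial A
  have hinj : Function.Injective (algebraMap k (CoordRing A)) := (algebraMap k _).injective
  have h2k : (2 : k) = 0 := CharTwo.two_eq_zero
  have h2 : (2 : CoordRing A) = 0 := by
    have := congrArg (algebraMap k (CoordRing A)) h2k
    rwa [map_ofNat, map_zero] at this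
  have hc : ∀ a : k, σ (algebraMap k _ a) = algebraMap k _ a := fun a => σ.commutes a
  have hX : (σ * σ) (AdjoinRoot.of _ X) = AdjoinRoot.of _ X := by
    rw [AlgEquiv.mul_apply, hσx, map_add, hσx, hc]
    linear_combination (algebraMap k (CoordRing A) t) * h2
  have hY : (σ * σ) (AdjoinRoot.root _) = AdjoinRoot.root _
        + algebraMap k _ (A * t ^ 5 * (A * t ^ 5 + A * t + 1)) := by
    have e : A * t ^ 5 * (A * t ^ 5 + A * t + 1) = f2 * t ^ 2 + f1 * t := by
      rw [hf1, hf2]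
      linear_combination (-A * t ^ 3) * h2k
    rw [e, AlgEquiv.mul_apply, hσy]
    simp only [map_add, map_mul, map_pow, hσx, hσy, hc]
    generalize algebraMap k (CoordRing A) f2 = a
    generalize algebraMap k (CoordRing A) f1 = b
    generalize algebraMap k (CoordRing A) f0 = c
    generalize algebraMap k (CoordRing A) t = d
    generalize AdjoinRoot.of (curvePolyA A) X = x
    linear_combination (a * x ^ 2 + a * x * d + b * x + c) * h2
  have hne : σ ≠ 1 := by
    intro h
    rw [h, AlgEquiv.one_apply] at hσx
    apply ht
    apply hinj
    rw [map_zero]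
    exact (left_eq_add.mp hσx)
  refine ⟨⟨hX, hY⟩, ?_, ?_⟩
  · intro h
    apply orderOf_eq_prime _ hne
    rw [pow_two]
    apply algEquiv_eq_one _ hX
    have e : A * t ^ 5 * (A * t ^ 5 + A * t + 1) = 0 := by
      have : A * t ^ 5 + A * t + 1 = 0 := by
        linear_combination A * h - mul_inv_cancel₀ hA
      rw [this, mul_zero]
    rw [hY, e, map_zero, add_zero]
  · intro h
    have e : A * t ^ 5 * (A * t ^ 5 + A * t + 1) = 1 := by
      have h1 := mul_inv_cancel₀ hA
      linear_combination A ^ 2 * h - (A * t ^ 5) * h1 - (A * A⁻¹ + 1) * h1 - h2k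
    rw [e, map_one] at hY
    refine ⟨?_, hY⟩
    have : orderOf σ = 2 ^ (1 + 1) := by
      apply orderOf_eq_prime_pow
      · rw [pow_one, pow_two]
        intro h'
        rw [h', AlgEquiv.one_apply] at hY
        exact one_ne_zero (left_eq_add.mp hY)
      · have e4 : σ ^ 2 ^ (1 + 1) = (σ * σ) * (σ * σ) := by
          rw [← pow_two, ← pow_two, ← pow_mul]; rfl
        rw [e4]
        apply algEquiv_eq_one
        · rw [AlgEquiv.mul_apply, hX, hX]
        · rw [AlgEquiv.mul_apply, hY, map_add, hY, map_one]
          linear_combination h2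
    exact this

end Stmt4
end

section
/- Let O be the maximal order in the quaternion algebra H = Q⟨i,j⟩ (i^2 = j^2 = −1, ij = −ji) containing i, j, and (1+i+j+ij)/2, and let M = [[2, 1+i],[1−i, 2]] ∈ M_2(O). Then the number of invertible matrices A ∈ M_2(O) satisfying A* M A = M, where A* is the conjugate-transpose of A, equals 1920. -/
open Quaternion

namespace Stmt9

/-- The quaternion `i` in `ℍ[ℚ]`. -/
def qi : ℍ[ℚ] := ⟨0, 1, 0, 0⟩

/-- The quaternion `j` in `ℍ[ℚ]`. -/
def qj : ℍ[ℚ] := ⟨0, 0, 1, 0⟩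

/-- The maximal order `O ⊂ H` containing `i`, `j` and `(1+i+j+ij)/2`
(the Hurwitz order). -/
noncomputable def O : Subring ℍ[ℚ] :=
  Subring.closure {qi, qj, (1 + qi + qj + qi * qj) / 2}

/-- The matrix `M = [[2, 1+i], [1-i, 2]]`. -/
noncomputable def M : Matrix (Fin 2) (Fin 2) ℍ[ℚ] := !![2, 1 + qi; 1 - qi, 2]

/-! ### Integer model: a Hurwitz quaternion is stored by its doubled coordinates. -/

abbrev Z4 := ℤ × ℤ × ℤ × ℤ

def r5 : List ℤ := [-2, -1, 0, 1, 2]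

def okq (x : Z4) : Bool :=
  match x with
  | (a, b, c, d) => decide (a*a+b*b+c*c+d*d ≤ 8) &&
      (decide ((a-b)%2=0) && (decide ((a-c)%2=0) && decide ((a-d)%2=0)))

/-- Hurwitz quaternions of norm at most two. -/
def L49 : List Z4 := (r5 ×ˢ (r5 ×ˢ (r5 ×ˢ r5))).filter okq

/-- `p * b + q * d = t`. -/
def dot (p q b d : Z4) (t : Z4) : Bool :=
  match p, q, b, d, t with
  | (p0,p1,p2,p3), (q0,q1,q2,q3), (b0,b1,b2,b3), (d0,d1,d2,d3), (t0,t1,t2,t3) =>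
   decide (p0*b0-p1*b1-p2*b2-p3*b3 + (q0*d0-q1*d1-q2*d2-q3*d3) = t0) &&
   (decide (p0*b1+p1*b0+p2*b3-p3*b2 + (q0*d1+q1*d0+q2*d3-q3*d2) = t1) &&
   (decide (p0*b2-p1*b3+p2*b0+p3*b1 + (q0*d2-q1*d3+q2*d0+q3*d1) = t2) &&
    decide (p0*b3+p1*b2-p2*b1+p3*b0 + (q0*d3+q1*d2-q2*d1+q3*d0) = t3)))

def pp (a c : Z4) : Z4 := match a, c with
  | (a0,a1,a2,a3), (c0,c1,c2,c3) => (2*a0+c0-c1, -2*a1-c0-c1, -2*a2-c2+c3, -2*a3-c2-c3)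

def qq (a c : Z4) : Z4 := match a, c with
  | (a0,a1,a2,a3), (c0,c1,c2,c3) => (a0+a1+2*c0, a0-a1-2*c1, -a2-a3-2*c2, a2-a3-2*c3)

def okv (v : Z4 × Z4) : Bool := dot (pp v.1 v.2) (qq v.1 v.2) v.1 v.2 (8,0,0,0)

/-- Vectors of norm two. -/
def L240 : List (Z4 × Z4) := (L49 ×ˢ L49).filter okv

def okw (v w : Z4 × Z4) : Bool := dot (pp v.1 v.2) (qq v.1 v.2) w.1 w.2 (4,4,0,0)

def e1 : Z4 × Z4 := ((2,0,0,0), (0,0,0,0))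

def L8 : List (Z4 × Z4) := L240.filter (okw e1)

set_option maxRecDepth 100000 in
theorem l240 : L240.length = 240 := by decide +kernel

set_option maxRecDepth 100000 in
theorem l8 : L8.length = 8 := by decide +kernel

set_option maxRecDepth 100000 in
theorem ex_w : (L240.all fun v => L240.any (okw v)) = true := by decide +kernel

theorem e1_mem : e1 ∈ L240 := by decide +kernel

theorem nodup49 : L49.Nodup := by
  have h : r5.Nodup := by decide
  exact (h.product (h.product (h.product h))).filter _

theorem nodup240 : L240.Nodup := (nodup49.product nodup49).filter _

theorem nodup8 : L8.Nodup := nodup240.filter _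

/-! ### The link with quaternions -/

def mkQ (a b c d : ℚ) : ℍ[ℚ] := ⟨a, b, c, d⟩

@[simp] theorem mkQ_re (a b c d : ℚ) : (mkQ a b c d).re = a := rfl
@[simp] theorem mkQ_imI (a b c d : ℚ) : (mkQ a b c d).imI = b := rfl
@[simp] theorem mkQ_imJ (a b c d : ℚ) : (mkQ a b c d).imJ = c := rfl
@[simp] theorem mkQ_imK (a b c d : ℚ) : (mkQ a b c d).imK = d := rfl
@[simp] theorem qi_re : qi.re = 0 := rfl
@[simp] theorem qi_imI : qi.imI = 1 := rfl
@[simp] theorem qi_imJ : qi.imJ = 0 := rfl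
@[simp] theorem qi_imK : qi.imK = 0 := rfl
@[simp] theorem qj_re : qj.re = 0 := rfl
@[simp] theorem qj_imI : qj.imI = 0 := rfl
@[simp] theorem qj_imJ : qj.imJ = 1 := rfl
@[simp] theorem qj_imK : qj.imK = 0 := rfl
@[simp] theorem two_re : (2 : ℍ[ℚ]).re = 2 := rfl
@[simp] theorem two_imI : (2 : ℍ[ℚ]).imI = 0 := rfl
@[simp] theorem two_imJ : (2 : ℍ[ℚ]).imJ = 0 := rfl
@[simp] theorem two_imK : (2 : ℍ[ℚ]).imK = 0 := rfl

theorem q_ext {x y : ℍ[ℚ]} (h1 : x.re = y.re) (h2 : x.imI = y.imI) (h3 : x.imJ = y.imJ)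
    (h4 : x.imK = y.imK) : x = y :=
  Quaternion.ext _ _ h1 h2 h3 h4

theorem q_ext_iff {x y : ℍ[ℚ]} : x = y ↔ x.re = y.re ∧ x.imI = y.imI ∧ x.imJ = y.imJ ∧
    x.imK = y.imK :=
  ⟨fun h => by subst h; exact ⟨rfl, rfl, rfl, rfl⟩, fun h => q_ext h.1 h.2.1 h.2.2.1 h.2.2.2⟩

def toQ (z : Z4) : ℍ[ℚ] := mkQ ((z.1 : ℚ)/2) ((z.2.1 : ℚ)/2) ((z.2.2.1 : ℚ)/2) ((z.2.2.2 : ℚ)/2)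

theorem toQ_inj {x y : Z4} (h : toQ x = toQ y) : x = y := by
  obtain ⟨a, b, c, d⟩ := x
  obtain ⟨a', b', c', d'⟩ := y
  obtain ⟨h1, h2, h3, h4⟩ := q_ext_iff.1 h
  simp only [toQ, mkQ_re, mkQ_imI, mkQ_imJ, mkQ_imK] at h1 h2 h3 h4
  have f : ∀ s t : ℤ, (s : ℚ)/2 = (t : ℚ)/2 → s = t := by
    intro s t h
    have : (s : ℚ) = t := by linarith
    exact_mod_cast this
  rw [f _ _ h1, f _ _ h2, f _ _ h3, f _ _ h4]

def mat (v w : Z4 × Z4) : Matrix (Fin 2) (Fin 2) ℍ[ℚ] :=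
  !![toQ v.1, toQ w.1; toQ v.2, toQ w.2]

theorem mat_inj {v w v' w' : Z4 × Z4} (h : mat v w = mat v' w') : v = v' ∧ w = w' := by
  have h1 := congrFun (congrFun h 0) 0
  have h2 := congrFun (congrFun h 0) 1
  have h3 := congrFun (congrFun h 1) 0
  have h4 := congrFun (congrFun h 1) 1
  simp only [mat, Matrix.of_apply, Matrix.cons_val', Matrix.cons_val_zero, Matrix.cons_val_one,
    Matrix.cons_val_fin_one] at h1 h2 h3 h4
  exact ⟨Prod.ext (toQ_inj h1) (toQ_inj h3), Prod.ext (toQ_inj h2) (toQ_inj h4)⟩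

theorem dot_spec (p q b d t : Z4) : dot p q b d t = true ↔
    (p.1*b.1-p.2.1*b.2.1-p.2.2.1*b.2.2.1-p.2.2.2*b.2.2.2
      + (q.1*d.1-q.2.1*d.2.1-q.2.2.1*d.2.2.1-q.2.2.2*d.2.2.2) = t.1) ∧
    (p.1*b.2.1+p.2.1*b.1+p.2.2.1*b.2.2.2-p.2.2.2*b.2.2.1
      + (q.1*d.2.1+q.2.1*d.1+q.2.2.1*d.2.2.2-q.2.2.2*d.2.2.1) = t.2.1) ∧
    (p.1*b.2.2.1-p.2.1*b.2.2.2+p.2.2.1*b.1+p.2.2.2*b.2.1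
      + (q.1*d.2.2.1-q.2.1*d.2.2.2+q.2.2.1*d.1+q.2.2.2*d.2.1) = t.2.2.1) ∧
    (p.1*b.2.2.2+p.2.1*b.2.2.1-p.2.2.1*b.2.1+p.2.2.2*b.1
      + (q.1*d.2.2.2+q.2.1*d.2.2.1-q.2.2.1*d.2.1+q.2.2.2*d.1) = t.2.2.2) := by
  obtain ⟨p0, p1, p2, p3⟩ := p
  obtain ⟨q0, q1, q2, q3⟩ := q
  obtain ⟨b0, b1, b2, b3⟩ := b
  obtain ⟨d0, d1, d2, d3⟩ := d
  obtain ⟨t0, t1, t2, t3⟩ := t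
  simp only [dot, Bool.and_eq_true, decide_eq_true_eq]

theorem dot_iff (a c b d t : Z4) : dot (pp a c) (qq a c) b d t = true ↔
    (star (toQ a) * 2 + star (toQ c) * (1 - qi)) * toQ b +
      (star (toQ a) * (1 + qi) + star (toQ c) * 2) * toQ d =
      mkQ ((t.1 : ℚ)/4) ((t.2.1 : ℚ)/4) ((t.2.2.1 : ℚ)/4) ((t.2.2.2 : ℚ)/4) := by
  rw [dot_spec, q_ext_iff]
  obtain ⟨a0, a1, a2, a3⟩ := a
  obtain ⟨b0, b1, b2, b3⟩ := b
  obtain ⟨c0, c1, c2, c3⟩ := c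
  obtain ⟨d0, d1, d2, d3⟩ := d
  obtain ⟨t0, t1, t2, t3⟩ := t
  have f : ∀ (s t : ℤ) (x y : ℚ), (s : ℚ) = 4 * x → (t : ℚ) = 4 * y → (s = t ↔ x = y) := by
    intro s t x y hs ht
    rw [← Int.cast_inj (α := ℚ), hs, ht]
    constructor
    · intro h; linarith
    · intro h; rw [h]
  refine and_congr (f _ _ _ _ ?_ ?_) (and_congr (f _ _ _ _ ?_ ?_)
    (and_congr (f _ _ _ _ ?_ ?_) (f _ _ _ _ ?_ ?_))) <;>
  simp only [toQ, pp, qq, mkQ_re, mkQ_imI, mkQ_imJ, mkQ_imK,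
    qi_re, qi_imI, qi_imJ, qi_imK, two_re, two_imI, two_imJ, two_imK,
    Quaternion.re_add, Quaternion.re_mul, Quaternion.imI_add, Quaternion.imI_mul,
    Quaternion.imJ_add, Quaternion.imJ_mul, Quaternion.imK_add, Quaternion.imK_mul,
    Quaternion.re_star, Quaternion.imI_star, Quaternion.imJ_star, Quaternion.imK_star,
    Quaternion.re_sub, Quaternion.imI_sub, Quaternion.imJ_sub, Quaternion.imK_sub,
    Quaternion.re_one, Quaternion.imI_one, Quaternion.imJ_one, Quaternion.imK_one] <;>
  push_cast <;> ring

theorem mat_iff (v w : Z4 × Z4) : (mat v w).conjTranspose * M * mat v w = M ↔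
    okv v = true ∧ okv w = true ∧ okw v w = true := by
  have hM : ∀ X : Matrix (Fin 2) (Fin 2) ℍ[ℚ], X = M ↔
      X 0 0 = 2 ∧ X 0 1 = 1 + qi ∧ X 1 0 = 1 - qi ∧ X 1 1 = 2 := by
    intro X
    constructor
    · rintro rfl; simp [M]
    · rintro ⟨h1, h2, h3, h4⟩
      ext1 i j
      fin_cases i <;> fin_cases j <;> simp [M, h1, h2, h3, h4]
  have hMh : M.conjTranspose = M := by
    rw [hM]
    refine ⟨?_, ?_, ?_, ?_⟩ <;> apply q_ext <;> simp [M]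
  have h10 : ((mat v w).conjTranspose * M * mat v w) 1 0 =
      star (((mat v w).conjTranspose * M * mat v w) 0 1) := by
    rw [← Matrix.conjTranspose_apply, Matrix.conjTranspose_mul, Matrix.conjTranspose_mul,
      Matrix.conjTranspose_conjTranspose, hMh, Matrix.mul_assoc]
  have e8 : (2 : ℍ[ℚ]) = mkQ (((8:ℤ) : ℚ)/4) (((0:ℤ) : ℚ)/4) (((0:ℤ) : ℚ)/4) (((0:ℤ) : ℚ)/4) := by
    apply q_ext <;> norm_num
  have e4 : (1 + qi : ℍ[ℚ]) = mkQ (((4:ℤ) : ℚ)/4) (((4:ℤ) : ℚ)/4) (((0:ℤ) : ℚ)/4) (((0:ℤ) : ℚ)/4) := by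
    apply q_ext <;> norm_num 
  have es : (1 - qi : ℍ[ℚ]) = star (1 + qi) := by
    apply q_ext <;> simp 
  have entry : ∀ i j : Fin 2, ((mat v w).conjTranspose * M * mat v w) i j =
      (star (mat v w 0 i) * 2 + star (mat v w 1 i) * (1 - qi)) * mat v w 0 j +
      (star (mat v w 0 i) * (1 + qi) + star (mat v w 1 i) * 2) * mat v w 1 j := by
    intro i j
    simp [Matrix.mul_apply, Fin.sum_univ_two, M]
  have i0 : ∀ v w, mat v w 0 0 = toQ v.1 := fun _ _ => rfl
  have i1 : ∀ v w, mat v w 0 1 = toQ w.1 := fun _ _ => rfl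
  have i2 : ∀ v w, mat v w 1 0 = toQ v.2 := fun _ _ => rfl
  have i3 : ∀ v w, mat v w 1 1 = toQ w.2 := fun _ _ => rfl
  rw [hM, h10, es, star_inj]
  have k1 : ((mat v w).conjTranspose * M * mat v w) 0 0 = 2 ↔ okv v = true := by
    have h := dot_iff v.1 v.2 v.1 v.2 (8, 0, 0, 0)
    simp only [← e8] at h
    rw [okv, h, entry, i0, i2]
  have k2 : ((mat v w).conjTranspose * M * mat v w) 1 1 = 2 ↔ okv w = true := by
    have h := dot_iff w.1 w.2 w.1 w.2 (8, 0, 0, 0)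
    simp only [← e8] at h
    rw [okv, h, entry, i1, i3]
  have k3 : ((mat v w).conjTranspose * M * mat v w) 0 1 = 1 + qi ↔ okw v w = true := by
    have h := dot_iff v.1 v.2 w.1 w.2 (4, 4, 0, 0)
    simp only [← e4] at h
    rw [okw, h, entry, i0, i1, i2, i3]
  rw [k1, k2, k3]
  exact ⟨fun h => ⟨h.1, h.2.2.2, h.2.1⟩, fun h => ⟨h.1, h.2.2, h.2.2, h.2.1⟩⟩

/-! ### The order -/

def hz (x y z w : ℤ) : ℍ[ℚ] := mkQ ((x : ℚ)/2) ((x : ℚ)/2 + y) ((x : ℚ)/2 + z) ((x : ℚ)/2 + w)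

theorem half_eq : (1 + qi + qj + qi * qj) / 2 = hz 1 0 0 0 := by
  have h2 : (2 : ℍ[ℚ]) ≠ 0 := fun h => two_ne_zero (α := ℚ) (congrArg (fun q : ℍ[ℚ] => q.re) h)
  rw [div_eq_iff h2]
  apply q_ext <;> simp [hz]

theorem hz_of_mem {q : ℍ[ℚ]} (h : q ∈ O) : ∃ x y z w : ℤ, q = hz x y z w := by
  induction h using Subring.closure_induction with
  | mem q hq =>
    rcases hq with rfl | rfl | rfl
    · exact ⟨0, 1, 0, 0, by apply q_ext <;> simp [hz]⟩
    · exact ⟨0, 0, 1, 0, by apply q_ext <;> simp [hz]⟩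
    · exact ⟨1, 0, 0, 0, half_eq⟩
  | zero => exact ⟨0, 0, 0, 0, by apply q_ext <;> simp [hz]⟩
  | one => exact ⟨2, -1, -1, -1, by apply q_ext <;> simp [hz]⟩
  | add a b _ _ iha ihb =>
    obtain ⟨x, y, z, w, rfl⟩ := iha
    obtain ⟨x', y', z', w', rfl⟩ := ihb
    exact ⟨x + x', y + y', z + z', w + w', by apply q_ext <;> simp [hz] <;> ring⟩
  | neg a _ iha =>
    obtain ⟨x, y, z, w, rfl⟩ := iha
    exact ⟨-x, -y, -z, -w, by apply q_ext <;> simp [hz] <;> ring⟩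
  | mul a b _ _ iha ihb =>
    obtain ⟨x, y, z, w, rfl⟩ := iha
    obtain ⟨x', y', z', w', rfl⟩ := ihb
    refine ⟨-x*x' - (x*y'+y*x'+2*y*y') - (x*z'+z*x'+2*z*z') - (x*w'+w*x'+2*w*w'),
      x*x'+x*y'+y*x'+x*w'+z*x'+z*w'-w*z'+y*y'+z*z'+w*w',
      x*x'+x*z'+z*x'+x*y'+w*x'+w*y'-y*w'+y*y'+z*z'+w*w',
      x*x'+x*w'+w*x'+x*z'+y*x'+y*z'-z*y'+y*y'+z*z'+w*w', ?_⟩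
    apply q_ext <;> simp only [hz, mkQ_re, mkQ_imI, mkQ_imJ, mkQ_imK, Quaternion.re_mul, Quaternion.imI_mul, Quaternion.imJ_mul,
      Quaternion.imK_mul] <;> push_cast <;> ring

theorem hz_mem (x y z w : ℤ) : hz x y z w ∈ O := by
  have hi : qi ∈ O := Subring.subset_closure (by simp)
  have hj : qj ∈ O := Subring.subset_closure (by simp)
  have hh : (1 + qi + qj + qi * qj) / 2 ∈ O := Subring.subset_closure (by simp)
  have : hz x y z w = x • ((1 + qi + qj + qi * qj) / 2) + y • qi + z • qj + w • (qi * qj) := by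
    rw [half_eq]
    apply q_ext <;> simp [hz] <;> ring
  rw [this]
  exact add_mem (add_mem (add_mem (zsmul_mem hh x) (zsmul_mem hi y)) (zsmul_mem hj z))
    (zsmul_mem (mul_mem hi hj) w)

def par (x : Z4) : Prop := (x.1 - x.2.1) % 2 = 0 ∧ (x.1 - x.2.2.1) % 2 = 0 ∧ (x.1 - x.2.2.2) % 2 = 0

theorem mem_O_iff (q : ℍ[ℚ]) : q ∈ O ↔ ∃ x : Z4, par x ∧ q = toQ x := by
  constructor
  · intro h
    obtain ⟨x, y, z, w, rfl⟩ := hz_of_mem h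
    refine ⟨(x, x + 2*y, x + 2*z, x + 2*w), ⟨?_, ?_, ?_⟩, ?_⟩
    · simp only; omega
    · simp only; omega
    · simp only; omega
    · apply q_ext <;> simp [hz, toQ] <;> ring
  · rintro ⟨⟨a, b, c, d⟩, ⟨h1, h2, h3⟩, rfl⟩
    simp only at h1 h2 h3
    obtain ⟨y, hy⟩ : ∃ y, b = a + 2 * y := ⟨(b - a)/2, by omega⟩
    obtain ⟨z, hz'⟩ : ∃ y, c = a + 2 * y := ⟨(c - a)/2, by omega⟩
    obtain ⟨w, hw⟩ : ∃ y, d = a + 2 * y := ⟨(d - a)/2, by omega⟩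
    have : toQ (a, b, c, d) = hz a y z w := by
      subst hy hz' hw
      apply q_ext <;> simp [hz, toQ] <;> ring
    rw [this]
    exact hz_mem _ _ _ _

theorem mem49 {x : Z4} : x ∈ L49 ↔ par x ∧ x.1*x.1+x.2.1*x.2.1+x.2.2.1*x.2.2.1+x.2.2.2*x.2.2.2 ≤ 8 := by
  obtain ⟨a, b, c, d⟩ := x
  have hr : ∀ t : ℤ, t * t ≤ 8 → t ∈ r5 := by
    intro t ht
    have h1 : t ≤ 2 := by nlinarith
    have h2 : -2 ≤ t := by nlinarith
    simp only [r5, List.mem_cons, List.not_mem_nil, or_false]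
    omega
  simp only [L49, List.mem_filter, List.mem_product, okq, Bool.and_eq_true, decide_eq_true_eq, par]
  constructor
  · rintro ⟨-, h1, h2⟩
    exact ⟨h2, h1⟩
  · rintro ⟨h2, h1⟩
    refine ⟨⟨hr _ ?_, hr _ ?_, hr _ ?_, hr _ ?_⟩, h1, h2⟩ <;>
      nlinarith [mul_self_nonneg a, mul_self_nonneg b, mul_self_nonneg c, mul_self_nonneg d]

theorem mem240 {v : Z4 × Z4} : v ∈ L240 ↔ par v.1 ∧ par v.2 ∧ okv v = true := by
  obtain ⟨a, c⟩ := v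
  simp only [L240, List.mem_filter, List.mem_product, mem49]
  constructor
  · rintro ⟨⟨h1, h2⟩, h3⟩
    exact ⟨h1.1, h2.1, h3⟩
  · rintro ⟨h1, h2, h3⟩
    refine ⟨⟨⟨h1, ?_⟩, ⟨h2, ?_⟩⟩, h3⟩ <;>
    · obtain ⟨a0, a1, a2, a3⟩ := a
      obtain ⟨c0, c1, c2, c3⟩ := c
      have h := ((dot_spec _ _ _ _ _).1 h3).1
      simp only [pp, qq] at h ⊢
      linarith [mul_self_nonneg (2*c0+a0+a1), mul_self_nonneg (2*c1+a1-a0),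
        mul_self_nonneg (2*c2+a2+a3), mul_self_nonneg (2*c3+a3-a2),
        mul_self_nonneg (2*a0+c0-c1), mul_self_nonneg (2*a1+c1+c0),
        mul_self_nonneg (2*a2+c2-c3), mul_self_nonneg (2*a3+c3+c2)]

/-! ### The group -/

def S : Set (Matrix (Fin 2) (Fin 2) ℍ[ℚ]) :=
  {A | (∀ i j, A i j ∈ O) ∧ A.conjTranspose * M * A = M}

theorem mem_S_iff (A : Matrix (Fin 2) (Fin 2) ℍ[ℚ]) :
    A ∈ S ↔ ∃ v ∈ L240, ∃ w ∈ L240, okw v w = true ∧ A = mat v w := by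
  constructor
  · rintro ⟨h1, h2⟩
    obtain ⟨a, ha, ha'⟩ := (mem_O_iff _).1 (h1 0 0)
    obtain ⟨b, hb, hb'⟩ := (mem_O_iff _).1 (h1 0 1)
    obtain ⟨c, hc, hc'⟩ := (mem_O_iff _).1 (h1 1 0)
    obtain ⟨d, hd, hd'⟩ := (mem_O_iff _).1 (h1 1 1)
    have hA : A = mat (a, c) (b, d) := by
      rw [Matrix.eta_fin_two A, ha', hb', hc', hd']; rfl
    rw [hA, mat_iff] at h2
    exact ⟨(a, c), mem240.2 ⟨ha, hc, h2.1⟩, (b, d), mem240.2 ⟨hb, hd, h2.2.1⟩, h2.2.2, hA⟩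
  · rintro ⟨v, hv, w, hw, h, rfl⟩
    obtain ⟨v1, v2, v3⟩ := mem240.1 hv
    obtain ⟨w1, w2, w3⟩ := mem240.1 hw
    refine ⟨?_, (mat_iff v w).2 ⟨v3, w3, h⟩⟩
    intro i j
    rw [mem_O_iff]
    fin_cases i <;> fin_cases j
    · exact ⟨_, v1, rfl⟩
    · exact ⟨_, w1, rfl⟩
    · exact ⟨_, v2, rfl⟩
    · exact ⟨_, w2, rfl⟩

theorem S_finite : S.Finite := by
  have : S ⊆ (fun x : (Z4 × Z4) × (Z4 × Z4) => mat x.1 x.2) '' {x | x ∈ L240 ×ˢ L240} := by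
    intro A hA
    obtain ⟨v, hv, w, hw, _, rfl⟩ := (mem_S_iff A).1 hA
    exact ⟨(v, w), List.mem_product.2 ⟨hv, hw⟩, rfl⟩
  exact ((List.finite_toSet _).image _).subset this

theorem one_mem_S : (1 : Matrix (Fin 2) (Fin 2) ℍ[ℚ]) ∈ S := by
  refine ⟨?_, by simp⟩
  intro i j
  rw [Matrix.one_apply]
  split_ifs
  · exact one_mem _
  · exact zero_mem _

theorem mul_mem_S {A B : Matrix (Fin 2) (Fin 2) ℍ[ℚ]} (hA : A ∈ S) (hB : B ∈ S) : A * B ∈ S := by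
  refine ⟨?_, ?_⟩
  · intro i j
    rw [Matrix.mul_apply]
    exact sum_mem fun k _ => mul_mem (hA.1 _ _) (hB.1 _ _)
  · calc (A * B).conjTranspose * M * (A * B)
        = B.conjTranspose * (A.conjTranspose * M * A) * B := by
          rw [Matrix.conjTranspose_mul]; simp only [Matrix.mul_assoc]
      _ = M := by rw [hA.2, hB.2]

theorem M_inv : ∃ N : Matrix (Fin 2) (Fin 2) ℍ[ℚ], N * M = 1 := by
  refine ⟨!![1, mkQ (-1/2) (-1/2) 0 0; mkQ (-1/2) (1/2) 0 0, 1], ?_⟩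
  ext1 i j
  fin_cases i <;> fin_cases j <;> apply q_ext <;>
    norm_num [Matrix.mul_apply, Fin.sum_univ_two, M]

theorem exists_left_inv {A : Matrix (Fin 2) (Fin 2) ℍ[ℚ]} (hA : A ∈ S) :
    ∃ C : Matrix (Fin 2) (Fin 2) ℍ[ℚ], C * A = 1 := by
  obtain ⟨N, hN⟩ := M_inv
  refine ⟨N * (A.conjTranspose * M), ?_⟩
  rw [Matrix.mul_assoc, hA.2, hN]

theorem exists_inv {A : Matrix (Fin 2) (Fin 2) ℍ[ℚ]} (hA : A ∈ S) :
    ∃ B ∈ S, A * B = 1 ∧ B * A = 1 := by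
  obtain ⟨C, hC⟩ := exists_left_inv hA
  have : Finite S := S_finite
  let f : S → S := fun B => ⟨A * B.1, mul_mem_S hA B.2⟩
  have hf : Function.Injective f := by
    intro x y h
    have h' : A * x.1 = A * y.1 := congrArg Subtype.val h
    apply Subtype.ext
    rw [← Matrix.one_mul x.1, ← Matrix.one_mul y.1, ← hC, Matrix.mul_assoc, h', Matrix.mul_assoc]
  obtain ⟨B, hB⟩ := Finite.surjective_of_injective hf ⟨1, one_mem_S⟩
  have hB' : A * B.1 = 1 := congrArg Subtype.val hB
  have : C = B.1 := by
    rw [← Matrix.mul_one C, ← hB', ← Matrix.mul_assoc, hC, Matrix.one_mul]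
  exact ⟨B.1, B.2, hB', this ▸ hC⟩

theorem exists_sel (v : {v // v ∈ L240}) : ∃ w ∈ L240, okw v.1 w = true := by
  have h := List.all_eq_true.1 ex_w v.1 v.2
  simpa using h

/-- First column of a matrix. -/
def col (A : Matrix (Fin 2) (Fin 2) ℍ[ℚ]) : Fin 2 → ℍ[ℚ] := fun i => A i 0

theorem col_mul (A B : Matrix (Fin 2) (Fin 2) ℍ[ℚ]) : col (A * B) = A.mulVec (col B) := by
  ext1 i
  simp [col, Matrix.mul_apply, Matrix.mulVec, dotProduct]

theorem col_mat (v w w' : Z4 × Z4) : col (mat v w) = col (mat v w') := by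
  have h0 : ∀ v w, mat v w 0 0 = toQ v.1 := fun _ _ => rfl
  have h1 : ∀ v w, mat v w 1 0 = toQ v.2 := fun _ _ => rfl
  have h : ∀ i, mat v w i 0 = mat v w' i 0 := by
    rw [Fin.forall_fin_two, h0, h0, h1, h1]
    exact ⟨Eq.refl _, Eq.refl _⟩
  exact funext h

theorem col_mat_inj {v w v' w' : Z4 × Z4} (h : col (mat v w) = col (mat v' w')) : v = v' :=
  Prod.ext (toQ_inj (congrFun h 0)) (toQ_inj (congrFun h 1))

theorem col_e1 (w : Z4 × Z4) : col (mat e1 w) = col 1 := by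
  ext1 i
  have h0 : toQ (0, 0, 0, 0) = 0 := by apply q_ext <;> simp [toQ]
  have h1 : toQ (2, 0, 0, 0) = 1 := by apply q_ext <;> simp [toQ]
  fin_cases i
  · exact h1
  · exact h0

theorem mat_e1_mem (w : {w // w ∈ L8}) : mat e1 w.1 ∈ S := by
  have h := List.mem_filter.1 w.2
  exact (mem_S_iff _).2 ⟨e1, e1_mem, w.1, h.1, h.2, rfl⟩

theorem card_S : Nat.card S = 1920 := by
  choose sel hsel hok using exists_sel
  have hA : ∀ v, mat v.1 (sel v) ∈ S := fun v =>
    (mem_S_iff _).2 ⟨v.1, v.2, sel v, hsel v, hok v, rfl⟩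
  let f : {v // v ∈ L240} × {w // w ∈ L8} → S := fun x =>
    ⟨mat x.1.1 (sel x.1) * mat e1 x.2.1, mul_mem_S (hA _) (mat_e1_mem _)⟩
  have hcol : ∀ (v : {v // v ∈ L240}) w, col (mat v.1 (sel v) * mat e1 w) = col (mat v.1 (sel v)) := by
    intro v w
    rw [col_mul, col_e1, ← col_mul, Matrix.mul_one]
  have hf : Function.Bijective f := by
    constructor
    · rintro ⟨v, w⟩ ⟨v', w'⟩ h
      have h' : mat v.1 (sel v) * mat e1 w.1 = mat v'.1 (sel v') * mat e1 w'.1 :=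
        congrArg Subtype.val h
      have hv : v = v' := by
        have := congrArg col h'
        rw [hcol, hcol] at this
        exact Subtype.ext (col_mat_inj this)
      subst hv
      obtain ⟨C, hC⟩ := exists_left_inv (hA v)
      have h2 : mat e1 w.1 = mat e1 w'.1 := by
        rw [← Matrix.one_mul (mat e1 w.1), ← hC, Matrix.mul_assoc, h', ← Matrix.mul_assoc, hC,
          Matrix.one_mul]
      rw [Subtype.ext (mat_inj h2).2]
    · rintro ⟨A, hAS⟩
      obtain ⟨v, hv, w, hw, hvw, rfl⟩ := (mem_S_iff A).1 hAS
      obtain ⟨B, hBS, hAB, hBA⟩ := exists_inv (hA ⟨v, hv⟩)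
      obtain ⟨v', hv', w', hw', hvw', hE⟩ := (mem_S_iff _).1 (mul_mem_S hBS hAS)
      have hc : col (mat v' w') = col (mat e1 w') := by
        rw [← hE, col_mul, col_mat v w (sel ⟨v, hv⟩), ← col_mul, hBA, col_e1]
      have hv1 : v' = e1 := col_mat_inj hc
      subst hv1
      refine ⟨(⟨v, hv⟩, ⟨w', List.mem_filter.2 ⟨hw', hvw'⟩⟩), Subtype.ext ?_⟩
      change mat v (sel ⟨v, hv⟩) * mat e1 w' = mat v w
      rw [← hE, ← Matrix.mul_assoc, hAB, Matrix.one_mul]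
  have hcard : ∀ l : List (Z4 × Z4), l.Nodup → Nat.card {x // x ∈ l} = l.length := by
    intro l hl
    rw [← List.toFinset_card_of_nodup hl, ← Nat.card_eq_finsetCard]
    exact Nat.card_congr (Equiv.subtypeEquivRight fun x => List.mem_toFinset.symm)
  have c1 := hcard _ nodup240
  have c2 := hcard _ nodup8
  rw [l240] at c1
  rw [l8] at c2
  have c3 := Nat.card_congr (Equiv.ofBijective f hf)
  rw [Nat.card_prod, c1, c2] at c3
  exact c3.symm.trans (by norm_num)

theorem card_main :
    Nat.card {A : Matrix (Fin 2) (Fin 2) ℍ[ℚ] //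
      (∀ i j, A i j ∈ O) ∧
      (∃ B : Matrix (Fin 2) (Fin 2) ℍ[ℚ],
        (∀ i j, B i j ∈ O) ∧ A * B = 1 ∧ B * A = 1) ∧
      A.conjTranspose * M * A = M} = 1920 := by
  rw [← card_S]
  refine Nat.card_congr (Equiv.subtypeEquivRight fun A => ?_)
  constructor
  · rintro ⟨h1, _, h2⟩
    exact ⟨h1, h2⟩
  · intro h
    obtain ⟨B, hB, h1, h2⟩ := exists_inv h
    exact ⟨h.1, ⟨B, hB.1, h1, h2⟩, h.2⟩

/-- There are exactly `1920` matrices `A`, invertible in `M₂(O)`, with `A* M A = M`,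
where `A*` is the conjugate transpose of `A`. -/
theorem stmt_9 :
    Nat.card {A : Matrix (Fin 2) (Fin 2) ℍ[ℚ] //
      (∀ i j, A i j ∈ O) ∧
      (∃ B : Matrix (Fin 2) (Fin 2) ℍ[ℚ],
        (∀ i j, B i j ∈ O) ∧ A * B = 1 ∧ B * A = 1) ∧
      A.conjTranspose * M * A = M} = 1920 := by
  exact card_main

end Stmt9
end
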